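/- Let m ≥ 1 and N ≥ 1 be natural numbers, let α = (α_1,…,α_m) ∈ ℕ^m be a multi-index, set ρ = m + |α|, and let u : ℝ^m \ {0} → ℂ be a smooth function with S_ρ^N u = 0 on ℝ^m \ {0}. Then the smooth vector field X(x) = x^α · (S_ρ^{N-1} u)(x) · x on ℝ^m \ {0} is divergence free: Σ_{i=1}^m ∂_i ( x_i · x^α · (S_ρ^{N-1} u)(x) ) = 0 for every x ∈ ℝ^m \ {0}. Equivalently, the (m-1)-form obtained by contracting the Euler vector field E = Σ x_i ∂_i into x^α (S_ρ^{N-1}u) dx^1∧…∧dx^m is closed on ℝ^m \ {0}. -/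

import Mathlib

/-- The scaling operator `S_ρ` acting on functions on `ℝ^m`:
`(S_ρ u)(x) = Σ_i x_i ∂_i u(x) + ρ u(x)`. -/
noncomputable def scalingOp (m : ℕ) (ρ : ℂ) (u : (Fin m → ℝ) → ℂ) : (Fin m → ℝ) → ℂ :=
  fun x => (∑ i : Fin m, (x i : ℂ) * fderiv ℝ u x (Pi.single i (1 : ℝ))) + ρ * u x

theorem sum_mul_fderiv_single (m : ℕ) (L : (Fin m → ℝ) →L[ℝ] ℂ) (x : Fin m → ℝ) :
    ∑ i : Fin m, (x i : ℂ) * L (Pi.single i (1 : ℝ)) = L x := by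
  conv_rhs => rw [pi_eq_sum_univ' x]
  rw [map_sum]
  refine Finset.sum_congr rfl fun i _ => ?_
  rw [map_smul, Complex.real_smul]

theorem hasFDerivAt_coord (m : ℕ) (i : Fin m) (x : Fin m → ℝ) :
    HasFDerivAt (fun y : Fin m → ℝ => (y i : ℂ))
      (Complex.ofRealCLM.comp (ContinuousLinearMap.proj (R := ℝ) (φ := fun _ : Fin m => ℝ) i)) x :=
  (Complex.ofRealCLM.comp
    (ContinuousLinearMap.proj (R := ℝ) (φ := fun _ : Fin m => ℝ) i)).hasFDerivAt

theorem monomial_euler (m : ℕ) (α : Fin m → ℕ) (x : Fin m → ℝ) (s : Finset (Fin m)) :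
    ∃ L : (Fin m → ℝ) →L[ℝ] ℂ,
      HasFDerivAt (fun y : Fin m → ℝ => ∏ j ∈ s, (y j : ℂ) ^ (α j)) L x ∧
      L x = (∑ j ∈ s, (α j : ℂ)) * ∏ j ∈ s, (x j : ℂ) ^ (α j) := by
  classical
  induction s using Finset.induction_on with
  | empty => exact ⟨0, by simpa using hasFDerivAt_const (1 : ℂ) x, by simp⟩
  | insert a s ha ih =>
    obtain ⟨L, hL, hLx⟩ := ih
    have h := ((hasFDerivAt_coord m a x).pow (α a)).mul hL
    refine ⟨_, by simp only [Finset.prod_insert ha]; exact h, ?_⟩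
    simp only [Finset.prod_insert ha, Finset.sum_insert ha]
    simp [hLx]
    rcases Nat.eq_zero_or_pos (α a) with h0 | h0
    · simp [h0]
    · obtain ⟨k, hk⟩ := Nat.exists_eq_add_of_lt h0
      simp [hk]
      ring

theorem scalingOp_contDiffOn (m : ℕ) (ρ : ℂ) (u : (Fin m → ℝ) → ℂ)
    (hu : ContDiffOn ℝ (⊤ : ℕ∞) u {x : Fin m → ℝ | x ≠ 0}) :
    ContDiffOn ℝ (⊤ : ℕ∞) (scalingOp m ρ u) {x : Fin m → ℝ | x ≠ 0} := by
  have ho : IsOpen {x : Fin m → ℝ | x ≠ 0} := isOpen_ne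
  have hf : ContDiffOn ℝ (⊤ : ℕ∞) (fderiv ℝ u) {x : Fin m → ℝ | x ≠ 0} :=
    hu.fderiv_of_isOpen ho (by simp)
  unfold scalingOp
  refine ContDiffOn.add (ContDiffOn.sum fun i _ => ContDiffOn.mul ?_ ?_)
    (contDiffOn_const.mul hu)
  · exact (Complex.ofRealCLM.comp (ContinuousLinearMap.proj (R := ℝ)
      (φ := fun _ : Fin m => ℝ) i)).contDiff.contDiffOn
  · exact hf.clm_apply contDiffOn_const

theorem scalingOp_iter_contDiffOn (m : ℕ) (ρ : ℂ) (u : (Fin m → ℝ) → ℂ)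
    (hu : ContDiffOn ℝ (⊤ : ℕ∞) u {x : Fin m → ℝ | x ≠ 0}) (n : ℕ) :
    ContDiffOn ℝ (⊤ : ℕ∞) ((scalingOp m ρ)^[n] u) {x : Fin m → ℝ | x ≠ 0} := by
  induction n with
  | zero => simpa using hu
  | succ n ih =>
    rw [Function.iterate_succ_apply']
    exact scalingOp_contDiffOn m ρ _ ih

/-- for `ρ = m + |α|` and `S_ρ^N u = 0` on `ℝ^m \ {0}`, the vector field
`X(x) = x^α (S_ρ^{N-1} u)(x) · x` is divergence free on `ℝ^m \ {0}`. -/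
theorem euler_contraction_closed
    (m N : ℕ) (hm : 1 ≤ m) (hN : 1 ≤ N) (α : Fin m → ℕ)
    (u : (Fin m → ℝ) → ℂ)
    (hu : ContDiffOn ℝ (⊤ : ℕ∞) u {x : Fin m → ℝ | x ≠ 0})
    (hscale : ∀ x : Fin m → ℝ, x ≠ 0 →
      ((scalingOp m ((m : ℂ) + ∑ j : Fin m, (α j : ℂ)))^[N] u) x = 0) :
    ∀ x : Fin m → ℝ, x ≠ 0 →
      ∑ i : Fin m,
        fderiv ℝ (fun y : Fin m → ℝ =>
            (y i : ℂ) * (∏ j : Fin m, (y j : ℂ) ^ (α j)) *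
              ((scalingOp m ((m : ℂ) + ∑ j : Fin m, (α j : ℂ)))^[N - 1] u) y)
          x (Pi.single i (1 : ℝ)) = 0 := by
  intro x hx
  have hs := hscale x hx
  obtain ⟨n, rfl⟩ : ∃ n, N = n + 1 := ⟨N - 1, by omega⟩
  rw [Function.iterate_succ_apply'] at hs
  rw [Nat.add_sub_cancel]
  have hv := scalingOp_iter_contDiffOn m ((m : ℂ) + ∑ j : Fin m, (α j : ℂ)) u hu n
  generalize (scalingOp m ((m : ℂ) + ∑ j : Fin m, (α j : ℂ)))^[n] u = v at hs hv ⊢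
  have hd : HasFDerivAt v (fderiv ℝ v x) x :=
    ((hv.contDiffAt (isOpen_ne.mem_nhds hx)).differentiableAt (by simp)).hasFDerivAt
  obtain ⟨L, hL, hLx⟩ := monomial_euler m α x Finset.univ
  unfold scalingOp at hs
  rw [sum_mul_fderiv_single] at hs
  have key : ∀ i : Fin m, fderiv ℝ (fun y : Fin m → ℝ =>
      (y i : ℂ) * (∏ j : Fin m, (y j : ℂ) ^ (α j)) * v y) x (Pi.single i (1 : ℝ)) =
      (∏ j : Fin m, (x j : ℂ) ^ (α j)) * v x
      + v x * ((x i : ℂ) * L (Pi.single i (1 : ℝ)))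
      + (∏ j : Fin m, (x j : ℂ) ^ (α j)) * ((x i : ℂ) * fderiv ℝ v x (Pi.single i (1 : ℝ))) := by
    intro i
    have h := (((hasFDerivAt_coord m i x).mul hL).mul hd).fderiv
    erw [h]
    simp
    ring
  simp only [key, Finset.sum_add_distrib, ← Finset.mul_sum, sum_mul_fderiv_single, hLx]
  simp only [Finset.sum_const, Finset.card_univ, Fintype.card_fin, nsmul_eq_mul]
  linear_combination (∏ j : Fin m, (x j : ℂ) ^ (α j)) * hs
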